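/- Let n ≥ 3 and let f ∈ Aut(F_n). Assume: (1) IA_n ⊆ N(f); (2) Γ_n(3) ⊆ ρ(N(f)); (3) the image of ρ(N(f)) ∩ SL_n(ℤ) under the composite SL_n(ℤ) → SL_n(ℤ/3ℤ) → PSL_n(ℤ/3ℤ) is nontrivial. Then N(f) = SAut(F_n) if det(f̄) = 1, and N(f) = Aut(F_n) if det(f̄) = −1. -/

import Mathlib

open Matrix

namespace NormalClosurePaper

/-- The automorphism group of the free group on `n` generators. -/
abbrev FrAut (n : ℕ) := MulAut (FreeGroup (Fin n))

/-- Exponent sum of the generator `x_i` in a word of the free group. -/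
def expSum {n : ℕ} (i : Fin n) : FreeGroup (Fin n) →* Multiplicative ℤ :=
  FreeGroup.lift fun j => Multiplicative.ofAdd (if j = i then (1 : ℤ) else 0)

/-- The abelianized matrix of an automorphism of the free group:
the `(i, j)` entry is the exponent sum of `x_i` in `f x_j`. -/
def mat {n : ℕ} (f : FrAut n) : Matrix (Fin n) (Fin n) ℤ :=
  Matrix.of fun i j => (expSum i (f (FreeGroup.of j))).toAdd

lemma expSum_apply {n : ℕ} (f : FrAut n) (i : Fin n) (w : FreeGroup (Fin n)) :
    (expSum i (f w)).toAdd = ∑ k, mat f i k * (expSum k w).toAdd := by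
  induction w using FreeGroup.induction_on with
  | C1 => simp
  | of j =>
      have h : (expSum i (f (FreeGroup.of j))).toAdd = mat f i j := rfl
      rw [h]
      simp [expSum, mul_ite, Finset.sum_ite_eq]
  | inv_of j ih =>
      simp only [_root_.map_inv, toAdd_inv, mul_neg, Finset.sum_neg_distrib, ih]
  | mul x y ihx ihy =>
      simp only [_root_.map_mul, toAdd_mul, mul_add, Finset.sum_add_distrib, ihx, ihy]

lemma mat_one {n : ℕ} : mat (1 : FrAut n) = 1 := by
  ext i j
  simp [mat, expSum, Matrix.one_apply, eq_comm]

lemma mat_mul {n : ℕ} (f g : FrAut n) : mat (f * g) = mat f * mat g := by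
  ext i j
  rw [Matrix.mul_apply]
  show (expSum i ((f * g) (FreeGroup.of j))).toAdd = _
  rw [show (f * g) (FreeGroup.of j) = f (g (FreeGroup.of j)) from rfl, expSum_apply]
  rfl

/-- The matrix of the induced map on the abelianization, as a monoid homomorphism. -/
def matHom (n : ℕ) : FrAut n →* Matrix (Fin n) (Fin n) ℤ where
  toFun := mat
  map_one' := mat_one
  map_mul' := mat_mul

/-- The homomorphism `Aut(F_n) → GL_n(ℤ)` induced by abelianization. -/
def ρ (n : ℕ) : FrAut n →* GL (Fin n) ℤ := (matHom n).toHomUnits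

/-- The composition of `ρ` with the determinant. -/
def detρ (n : ℕ) : FrAut n →* ℤˣ := (Matrix.GeneralLinearGroup.det).comp (ρ n)

/-- The special automorphism group `SAut(F_n)`: automorphisms whose induced matrix
has determinant `1`. -/
def SAut (n : ℕ) : Subgroup (FrAut n) := (detρ n).ker

/-- The Torelli subgroup `IA_n`, the kernel of `ρ`. -/
def IA (n : ℕ) : Subgroup (FrAut n) := (ρ n).ker

/-- The group of inner automorphisms of the free group. -/
def Inn (n : ℕ) : Subgroup (FrAut n) := (MulAut.conj (G := FreeGroup (Fin n))).range

instance Inn_normal (n : ℕ) : (Inn n).Normal := by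
  constructor
  rintro - ⟨a, rfl⟩ g
  refine ⟨g a, ?_⟩
  ext y
  simp [MulAut.conj_apply, MulAut.mul_apply, _root_.map_mul, _root_.map_inv]

/-- The outer automorphism group `Out(F_n)`. -/
abbrev OutF (n : ℕ) := FrAut n ⧸ Inn n

/-- The projection `Aut(F_n) → Out(F_n)`. -/
def toOut (n : ℕ) : FrAut n →* OutF n := QuotientGroup.mk' (Inn n)

lemma mat_conj {n : ℕ} (g : FreeGroup (Fin n)) : mat (MulAut.conj g) = 1 := by
  rw [← mat_one (n := n)]
  ext i j
  simp only [mat, Matrix.of_apply, MulAut.conj_apply, MulAut.one_apply, _root_.map_mul,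
    _root_.map_inv, toAdd_mul, toAdd_inv]
  omega

lemma ρ_conj {n : ℕ} (g : FreeGroup (Fin n)) : ρ n (MulAut.conj g) = 1 :=
  Units.ext (mat_conj g)

/-- The homomorphism `Out(F_n) → GL_n(ℤ)` induced by abelianization. -/
def ρOut (n : ℕ) : OutF n →* GL (Fin n) ℤ :=
  QuotientGroup.lift (Inn n) (ρ n) (by rintro - ⟨g, rfl⟩; exact ρ_conj g)

/-- The composition of `ρOut` with the determinant. -/
def detρOut (n : ℕ) : OutF n →* ℤˣ := (Matrix.GeneralLinearGroup.det).comp (ρOut n)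

/-- The special outer automorphism group `SOut(F_n)`. -/
def SOut (n : ℕ) : Subgroup (OutF n) := (detρOut n).ker

/-- Entrywise reduction `GL_n(ℤ) → GL_n(ℤ/ℓℤ)`. -/
def redGL (n ℓ : ℕ) : GL (Fin n) ℤ →* GL (Fin n) (ZMod ℓ) :=
  Units.map (RingHom.mapMatrix (Int.castRingHom (ZMod ℓ))).toMonoidHom

/-- The subgroup `GΓ_n(ℓ)` of `GL_n(ℤ)` of matrices congruent to the identity mod `ℓ`. -/
def GGamma (n ℓ : ℕ) : Subgroup (GL (Fin n) ℤ) := (redGL n ℓ).ker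

/-- The level `ℓ` congruence subgroup `Γ_n(ℓ)` (viewed inside `GL_n(ℤ)`): matrices with
determinant `1` that are congruent to the identity mod `ℓ`. -/
def GammaGL (n ℓ : ℕ) : Subgroup (GL (Fin n) ℤ) :=
  GGamma n ℓ ⊓ (Matrix.GeneralLinearGroup.det).ker

/-- Reduction `SL_n(ℤ) → SL_n(ℤ/ℓℤ)`. -/
def redSL (n ℓ : ℕ) : Matrix.SpecialLinearGroup (Fin n) ℤ →*
    Matrix.SpecialLinearGroup (Fin n) (ZMod ℓ) :=
  Matrix.SpecialLinearGroup.map (Int.castRingHom (ZMod ℓ))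

/-- Projection `SL_n(ℤ/ℓℤ) → PSL_n(ℤ/ℓℤ)`. -/
def projPSL (n ℓ : ℕ) : Matrix.SpecialLinearGroup (Fin n) (ZMod ℓ) →*
    Matrix.ProjectiveSpecialLinearGroup (Fin n) (ZMod ℓ) :=
  QuotientGroup.mk' _


/-- The inclusion `SL_n(ℤ) → GL_n(ℤ)`. -/
def toGLZ (n : ℕ) : Matrix.SpecialLinearGroup (Fin n) ℤ →* GL (Fin n) ℤ :=
  Matrix.SpecialLinearGroup.toGL

section SpecialLinear

open Matrix.SpecialLinearGroup

/-- A vector space of dimension at least three has a nonzero linear form vanishing at two given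
vectors. -/
lemma exists_dotProduct_eq_zero {ι F : Type*} [Fintype ι] [Field F]
    (hι : 3 ≤ Fintype.card ι) (u v : ι → F) :
    ∃ φ : ι → F, φ ≠ 0 ∧ φ ⬝ᵥ u = 0 ∧ φ ⬝ᵥ v = 0 := by
  have hlt : Module.finrank F (Fin 2 → F) < Module.finrank F (ι → F) := by
    simp only [Module.finrank_fintype_fun_eq_card, Fintype.card_fin]
    omega
  obtain ⟨φ, hφ, hne⟩ := Submodule.exists_mem_ne_zero_of_ne_bot
    (LinearMap.ker_ne_bot_of_finrank_lt (f := (Matrix.of ![u, v]).mulVecLin) hlt)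
  have h := LinearMap.mem_ker.1 hφ
  refine ⟨φ, hne, ?_, ?_⟩
  · simpa [mulVec, dotProduct_comm] using congrFun h 0
  · simpa [mulVec, dotProduct_comm] using congrFun h 1

variable {ι F : Type*} [Fintype ι] [DecidableEq ι] [Field F]

/-- A diagonal matrix with entries `a`, `a⁻¹` in two positions is a product of transvections. -/
lemma diag2n_eq_prod_transvection {i j : ι} (hij : i ≠ j) (a : F) (ha : a ≠ 0) :
    diag2n hij a ha = transvection hij a * transvection hij.symm (-a⁻¹) * transvection hij a *
      transvection hij (-1) * transvection hij.symm 1 * transvection hij (-1) := by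
  refine Subtype.ext ?_
  have hd : (diag2n hij a ha).1 = 1 + single i i (a - 1) + single j j (a⁻¹ - 1) := by
    rw [diag2n_coe]
    ext k l
    simp only [diagonal_apply, Matrix.add_apply, Matrix.one_apply, single_apply]
    grind
  rw [hd]
  simp only [Matrix.SpecialLinearGroup.coe_mul, transvection_coe]
  simp only [mul_add, add_mul, one_mul, mul_one, single_mul_single_same,
    single_mul_single_of_ne _ _ _ _ hij, single_mul_single_of_ne _ _ _ _ hij.symm, add_zero]
  ext k l
  simp only [Matrix.add_apply, Matrix.one_apply, single_apply]
  grind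

/-- The special linear group over a field is generated by elementary transvections. -/
lemma eq_top_of_transvection_mem [Nontrivial ι] (N : Subgroup (SpecialLinearGroup ι F))
    (hN : ∀ (i j : ι) (hij : i ≠ j) (b : F), transvection hij b ∈ N) : N = ⊤ := by
  refine eq_top_iff.2 fun A _ => ?_
  refine diagonal_transvection_induction' (· ∈ N) A (fun i j hij c hc => ?_) hN
    fun _ _ => N.mul_mem
  rw [diag2n_eq_prod_transvection]
  exact N.mul_mem (N.mul_mem (N.mul_mem (N.mul_mem (N.mul_mem (hN _ _ _ _) (hN _ _ _ _))
    (hN _ _ _ _)) (hN _ _ _ _)) (hN _ _ _ _)) (hN _ _ _ _)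

/-- The transvection `x ↦ x + (φ ⬝ᵥ x) • a` attached to a vector `a` and a linear form `φ`
vanishing at `a`. -/
def rankOneTransvection (a φ : ι → F) (h : φ ⬝ᵥ a = 0) : SpecialLinearGroup ι F :=
  ⟨1 + vecMulVec a φ, by
    rw [vecMulVec_eq Unit, det_one_add_replicateCol_mul_replicateRow, h, add_zero]⟩

lemma coe_rankOneTransvection (a φ : ι → F) (h : φ ⬝ᵥ a = 0) :
    (rankOneTransvection a φ h : Matrix ι ι F) = 1 + vecMulVec a φ := rfl

lemma transvection_eq_rankOneTransvection {i j : ι} (hij : i ≠ j) (b : F) :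
    transvection hij b = rankOneTransvection (Pi.single i b) (Pi.single j 1)
      (by simp [hij]) := by
  refine Subtype.ext ?_
  rw [transvection_coe, coe_rankOneTransvection]
  ext k l
  simp [single_apply, vecMulVec_apply, Pi.single_apply]
  grind

variable {N : Subgroup (SpecialLinearGroup ι F)} [N.Normal]

/-- If `B ∈ N` fixes the linear form `φ`, then the commutators of `B` with the transvections
attached to `φ` are again transvections attached to `φ`. -/
lemma rankOneTransvection_sub_mem {B : SpecialLinearGroup ι F} (hB : B ∈ N) (a φ : ι → F)
    (h : φ ⬝ᵥ a = 0) (hφ : φ ᵥ* B.1 = φ) (h' : φ ⬝ᵥ (B.1 *ᵥ a - a) = 0) :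
    rankOneTransvection (B.1 *ᵥ a - a) φ h' ∈ N := by
  have hz (x : ι → F) : vecMulVec x φ *ᵥ a = 0 := by
    rw [vecMulVec_mulVec, h, MulOpposite.op_zero, zero_smul]
  have key : B * rankOneTransvection a φ h =
      rankOneTransvection (B.1 *ᵥ a - a) φ h' * rankOneTransvection a φ h * B := by
    refine Subtype.ext ?_
    simp only [Matrix.SpecialLinearGroup.coe_mul, coe_rankOneTransvection]
    simp only [mul_add, add_mul, mul_one, one_mul, mul_vecMulVec, vecMulVec_mul, hφ, hz,
      zero_vecMulVec, sub_vecMulVec, sub_mul]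
    abel
  have key' : rankOneTransvection (B.1 *ᵥ a - a) φ h' =
      B * (rankOneTransvection a φ h * B⁻¹ * (rankOneTransvection a φ h)⁻¹) := by
    rw [← mul_assoc, ← mul_assoc, key]
    group
  rw [key']
  exact N.mul_mem hB (‹N.Normal›.conj_mem _ (N.inv_mem hB) _)

/-- A non-central normal subgroup of `SL_n`, `n ≥ 3`, contains a non-trivial transvection. -/
lemma exists_rankOneTransvection_mem (hι : 3 ≤ Fintype.card ι)
    (hN : ¬ N ≤ Subgroup.center (SpecialLinearGroup ι F)) :
    ∃ (a φ : ι → F) (h : φ ⬝ᵥ a = 0), a ≠ 0 ∧ φ ≠ 0 ∧ rankOneTransvection a φ h ∈ N := by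
  have : Nontrivial ι := Fintype.one_lt_card_iff_nontrivial.1 (by omega)
  obtain ⟨A, hA, hAc⟩ := SetLike.not_le_iff_exists.1 hN
  obtain ⟨i, j, hij, b, hne⟩ : ∃ (i j : ι) (hij : i ≠ j) (b : F),
      transvection hij b * A ≠ A * transvection hij b := by
    by_contra! hcomm
    refine hAc (Subgroup.mem_center_iff.2 fun g => ?_)
    have htop := eq_top_of_transvection_mem (Subgroup.centralizer {A})
      fun i j hij b => Subgroup.mem_centralizer_singleton_iff.2 (hcomm i j hij b)
    exact Subgroup.mem_centralizer_singleton_iff.1 (htop ▸ Subgroup.mem_top g)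
  set t : SpecialLinearGroup ι F := transvection hij b with ht
  set B := A * (t * A⁻¹ * t⁻¹) with hBdef
  have hB : B ∈ N := N.mul_mem hA (‹N.Normal›.conj_mem _ (N.inv_mem hA) _)
  have hB1 : B ≠ 1 := by
    intro h
    apply hne
    rw [hBdef, ← mul_assoc, ← mul_assoc, mul_inv_eq_one, mul_inv_eq_iff_eq_mul] at h
    exact h.symm
  obtain ⟨φ, hφ0, hφu, hφi⟩ := exists_dotProduct_eq_zero hι (A.1 *ᵥ Pi.single i b) (Pi.single i b)
  have htφ : φ ᵥ* t.1 = φ := by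
    rw [ht, transvection_eq_rankOneTransvection, coe_rankOneTransvection, vecMul_add,
      vecMul_one, vecMul_vecMulVec, hφi, zero_smul, add_zero]
  have hAtφ : (φ ᵥ* A.1) ᵥ* t.1 = φ ᵥ* A.1 := by
    rw [ht, transvection_eq_rankOneTransvection, coe_rankOneTransvection, vecMul_add,
      vecMul_one, vecMul_vecMulVec, ← dotProduct_mulVec, hφu, zero_smul, add_zero]
  have hBt : B * (t * A) = A * t := by rw [hBdef]; group
  have cancel (g : SpecialLinearGroup ι F) (x y : ι → F) (h : x ᵥ* g.1 = y ᵥ* g.1) : x = y := by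
    have h2 := congrArg (· ᵥ* (g⁻¹).1) h
    simpa [vecMul_vecMul, ← Matrix.SpecialLinearGroup.coe_mul, -coe_inv] using h2
  have hBφ : φ ᵥ* B.1 = φ := by
    apply cancel (t * A)
    rw [vecMul_vecMul, ← Matrix.SpecialLinearGroup.coe_mul, hBt, Matrix.SpecialLinearGroup.coe_mul,
      Matrix.SpecialLinearGroup.coe_mul, ← vecMul_vecMul, ← vecMul_vecMul, hAtφ, htφ]
  have hsub (x : ι → F) : φ ⬝ᵥ (B.1 *ᵥ x - x) = 0 := by
    rw [dotProduct_sub, dotProduct_mulVec, hBφ, sub_self]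
  by_cases hfix : ∃ x, φ ⬝ᵥ x = 0 ∧ B.1 *ᵥ x ≠ x
  · obtain ⟨x, hx, hBx⟩ := hfix
    exact ⟨_, φ, hsub x, sub_ne_zero.2 hBx, hφ0, rankOneTransvection_sub_mem hB x φ hx hBφ _⟩
  · push Not at hfix
    obtain ⟨k, hk⟩ := Function.ne_iff.1 hφ0
    simp only [Pi.zero_apply] at hk
    set y : ι → F := Pi.single k (φ k)⁻¹ with hy
    have hφy : φ ⬝ᵥ y = 1 := by simp [hy, hk]
    have hBeq : B = rankOneTransvection (B.1 *ᵥ y - y) φ (hsub y) := by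
      refine Subtype.ext (Matrix.mulVec_injective (funext fun x => ?_))
      have hx := hfix (x - (φ ⬝ᵥ x) • y) (by simp [hφy])
      rw [mulVec_sub, mulVec_smul, sub_eq_iff_eq_add] at hx
      rw [coe_rankOneTransvection, add_mulVec, one_mulVec, vecMulVec_mulVec, hx]
      ext l
      simp
      ring
    refine ⟨_, φ, hsub y, fun h0 => hB1 ?_, hφ0, hBeq ▸ hB⟩
    rw [hBeq]
    refine Subtype.ext ?_
    rw [coe_rankOneTransvection, h0, zero_vecMulVec, add_zero]
    rfl

/-- If a transvection with direction `e_i` lies in a normal subgroup of `SL_n`, `n ≥ 3`, then so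
do all elementary transvections of row `i`. -/
lemma transvection_mem_of_rankOneTransvection_mem (hι : 3 ≤ Fintype.card ι) {i : ι} {φ : ι → F}
    (h : φ ⬝ᵥ Pi.single i 1 = 0) (hφ : φ ≠ 0)
    (hmem : rankOneTransvection (Pi.single i 1) φ h ∈ N) {l : ι} (hil : i ≠ l) (b : F) :
    transvection hil b ∈ N := by
  have third (p q : ι) : ∃ r, r ≠ p ∧ r ≠ q := by
    have : ({p, q} : Finset ι).card < Fintype.card ι := (Finset.card_le_two).trans_lt (by omega)
    obtain ⟨r, hr⟩ := Finset.exists_mem_notMem_of_card_lt_card (s := {p, q}) (t := Finset.univ) this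
    exact ⟨r, by simpa using hr⟩
  have step (ψ : ι → F) (hψ : ψ ⬝ᵥ Pi.single i 1 = 0)
      (hψm : rankOneTransvection (Pi.single i 1) ψ hψ ∈ N) (j : ι) (hj : ψ j ≠ 0)
      (k : ι) (hik : i ≠ k) (hkj : k ≠ j) (c : F) : transvection hik c ∈ N := by
    have hBa : (rankOneTransvection (Pi.single i 1) ψ hψ).1 *ᵥ Pi.single j (c * (ψ j)⁻¹) -
        Pi.single j (c * (ψ j)⁻¹) = Pi.single i c := by
      rw [coe_rankOneTransvection, add_mulVec, one_mulVec, vecMulVec_mulVec, add_sub_cancel_left]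
      ext l
      simp only [dotProduct_single, Pi.smul_apply, Pi.single_apply, MulOpposite.smul_eq_mul_unop,
        MulOpposite.unop_op]
      split_ifs <;> simp
      field_simp
    have hB := rankOneTransvection_sub_mem hψm (Pi.single j (c * (ψ j)⁻¹)) (Pi.single k 1)
      (by simp [hkj]) (by
        rw [coe_rankOneTransvection, vecMul_add, vecMul_one, vecMul_vecMulVec]
        simp [hik]) (by rw [hBa]; simp [hik])
    rw [transvection_eq_rankOneTransvection]
    simpa only [hBa] using hB
  obtain ⟨j, hj⟩ := Function.ne_iff.1 hφ
  simp only [Pi.zero_apply] at hj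
  by_cases hlj : l = j
  · subst hlj
    obtain ⟨k, hki, hkl⟩ := third i l
    have hk := step φ h hmem l hj k hki.symm hkl 1
    rw [transvection_eq_rankOneTransvection] at hk
    exact step _ _ hk k (by simp) l hil hkl.symm b
  · exact step φ h hmem j hj l hil hlj b

/-- Over a field, a non-central normal subgroup of `SL_n`, `n ≥ 3`, is the whole group. -/
theorem eq_top_of_normal_of_not_le_center (hι : 3 ≤ Fintype.card ι)
    (hN : ¬ N ≤ Subgroup.center (SpecialLinearGroup ι F)) : N = ⊤ := by
  have : Nontrivial ι := Fintype.one_lt_card_iff_nontrivial.1 (by omega)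
  obtain ⟨a, φ, h, ha, hφ, hmem⟩ := exists_rankOneTransvection_mem hι hN
  refine eq_top_of_transvection_mem N fun i l hil b => ?_
  have he : (Pi.single i 1 : ι → F) ≠ 0 := by simp
  obtain ⟨g, hg⟩ := MulAction.exists_smul_eq (SpecialLinearGroup ι F)
    (Projectivization.mk F _ he) (Projectivization.mk F a ha)
  rw [Projectivization.smul_mk, Projectivization.mk_eq_mk_iff] at hg
  obtain ⟨r, hr⟩ := hg
  have hr' : g.1 *ᵥ Pi.single i 1 = (r : F) • a := hr.symm
  set ψ : ι → F := (r⁻¹ : Fˣ).1 • (φ ᵥ* g.1) with hψ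
  have hψi : ψ ⬝ᵥ Pi.single i 1 = 0 := by
    rw [hψ, smul_dotProduct, ← dotProduct_mulVec, hr', dotProduct_smul, h, smul_zero, smul_zero]
  have hφg : φ ᵥ* g.1 = (r : F) • ψ := by simp [hψ]
  have hψ0 : ψ ≠ 0 := by
    intro h0
    rw [h0, smul_zero] at hφg
    have h2 := congrArg (· ᵥ* (g⁻¹).1) hφg
    apply hφ
    simpa [vecMul_vecMul, ← Matrix.SpecialLinearGroup.coe_mul, -coe_inv] using h2
  refine transvection_mem_of_rankOneTransvection_mem hι hψi hψ0 ?_ hil b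
  have hconj : rankOneTransvection (Pi.single i 1) ψ hψi =
      g⁻¹ * rankOneTransvection a φ h * g⁻¹⁻¹ := by
    rw [inv_inv, mul_assoc, eq_inv_mul_iff_mul_eq]
    refine Subtype.ext ?_
    simp only [Matrix.SpecialLinearGroup.coe_mul, coe_rankOneTransvection, mul_add, add_mul,
      mul_one, one_mul, mul_vecMulVec, vecMulVec_mul, hr', hφg, smul_vecMulVec, vecMulVec_smul]
  rw [hconj]
  exact ‹N.Normal›.conj_mem _ hmem _

end SpecialLinear

/-- The endomorphism of the free group fixing all generators except `x_j`, which is sent to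
`x_j * x_i ^ m`. -/
def nielsenHom {n : ℕ} (i j : Fin n) (m : ℤ) : FreeGroup (Fin n) →* FreeGroup (Fin n) :=
  FreeGroup.lift fun k =>
    if k = j then FreeGroup.of j * FreeGroup.of i ^ m else FreeGroup.of k

lemma nielsenHom_of {n : ℕ} (i j k : Fin n) (m : ℤ) : nielsenHom i j m (FreeGroup.of k) =
    if k = j then FreeGroup.of j * FreeGroup.of i ^ m else FreeGroup.of k := by
  simp [nielsenHom]

lemma nielsenHom_comp_neg {n : ℕ} {i j : Fin n} (hij : i ≠ j) (m : ℤ) :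
    (nielsenHom i j m).comp (nielsenHom i j (-m)) = MonoidHom.id _ := by
  ext k : 1
  rw [MonoidHom.comp_apply, nielsenHom_of]
  split_ifs with hk
  · simp [nielsenHom_of, hij, hk]
  · simp [nielsenHom_of, hk]

/-- The Nielsen automorphism `x_j ↦ x_j * x_i ^ m` of the free group. -/
def nielsen {n : ℕ} {i j : Fin n} (hij : i ≠ j) (m : ℤ) : FrAut n :=
  MonoidHom.toMulEquiv (nielsenHom i j m) (nielsenHom i j (-m))
    (by simpa using nielsenHom_comp_neg hij (-m)) (nielsenHom_comp_neg hij m)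

lemma mat_nielsen {n : ℕ} {i j : Fin n} (hij : i ≠ j) (m : ℤ) :
    mat (nielsen hij m) = Matrix.transvection i j m := by
  ext k l
  change (expSum k (nielsenHom i j m (FreeGroup.of l))).toAdd = _
  rw [nielsenHom_of]
  split_ifs with hl
  · subst hl
    simp [expSum, Matrix.transvection, Matrix.one_apply, Matrix.single_apply]
    grind
  · simp [expSum, Matrix.transvection, Matrix.one_apply, Matrix.single_apply]
    grind

lemma ρ_nielsen {n : ℕ} {i j : Fin n} (hij : i ≠ j) (m : ℤ) :
    ρ n (nielsen hij m) = toGLZ n (Matrix.SpecialLinearGroup.transvection hij m) :=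
  Units.ext (mat_nielsen hij m)

/-- Every element of `SL_n(ℤ/pℤ)`, `p` prime, is the reduction of a matrix of determinant `1`
induced by an automorphism of the free group. -/
lemma map_redSL_comap_range_ρ {n : ℕ} (hn : 2 ≤ n) (p : ℕ) [Fact p.Prime] :
    ((ρ n).range.comap (toGLZ n)).map (redSL n p) = ⊤ := by
  have : Nontrivial (Fin n) := Fin.nontrivial_iff_two_le.2 hn
  refine eq_top_of_transvection_mem _ fun i j hij b => ?_
  obtain ⟨m, rfl⟩ := ZMod.intCast_surjective b
  refine ⟨Matrix.SpecialLinearGroup.transvection hij m, ⟨nielsen hij m, ρ_nielsen hij m⟩, ?_⟩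
  ext k l
  simp [redSL, Matrix.SpecialLinearGroup.transvection_coe, Matrix.one_apply, Matrix.single_apply]

/-- A normal subgroup of `Aut(F_n)` containing `IA_n`, whose image in `GL_n(ℤ)` contains the
level `p` congruence subgroup and whose image in `PSL_n(ℤ/pℤ)` is nontrivial, contains
`SAut(F_n)`. -/
theorem SAut_le_of_normal {n : ℕ} (hn : 3 ≤ n) (p : ℕ) [Fact p.Prime] (H : Subgroup (FrAut n))
    [H.Normal] (h1 : IA n ≤ H) (h2 : GammaGL n p ≤ H.map (ρ n))
    (h3 : Subgroup.map ((projPSL n p).comp (redSL n p))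
        (Subgroup.comap (toGLZ n) (H.map (ρ n))) ≠ ⊥) : SAut n ≤ H := by
  set N := (Subgroup.comap (toGLZ n) (H.map (ρ n))).map (redSL n p) with hN
  have hnormal : N.Normal := by
    constructor
    rintro _ ⟨y, ⟨h, hh, hy⟩, rfl⟩ g
    obtain ⟨r, ⟨g', hg'⟩, rfl⟩ : g ∈ ((ρ n).range.comap (toGLZ n)).map (redSL n p) := by
      rw [map_redSL_comap_range_ρ (by omega) p]
      exact Subgroup.mem_top g
    refine ⟨r * y * r⁻¹, ⟨g' * h * g'⁻¹, ‹H.Normal›.conj_mem h hh g', ?_⟩, ?_⟩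
    · simp only [map_mul, map_inv, hg', hy]
    · simp only [map_mul, map_inv]
  have htop : N = ⊤ := by
    refine eq_top_of_normal_of_not_le_center (by simpa using hn) fun hle => h3 ?_
    rw [← Subgroup.map_map, ← hN, Subgroup.map_eq_bot_iff]
    simpa [projPSL] using hle
  intro g hg
  let A : Matrix.SpecialLinearGroup (Fin n) ℤ := ⟨mat g, congrArg Units.val hg⟩
  have hA : toGLZ n A = ρ n g := Units.ext rfl
  obtain ⟨y, ⟨h, hh, hy⟩, hyA⟩ : redSL n p A ∈ N := htop ▸ Subgroup.mem_top _
  have hmem : toGLZ n (A * y⁻¹) ∈ GammaGL n p := by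
    have hred : redSL n p (A * y⁻¹) = 1 := by rw [map_mul, map_inv, hyA, mul_inv_cancel]
    refine ⟨Units.ext (congrArg Subtype.val hred), Units.ext (A * y⁻¹).2⟩
  obtain ⟨k, hk, hk'⟩ := h2 hmem
  have hIA : g * h⁻¹ * k⁻¹ ∈ IA n := by
    rw [IA, MonoidHom.mem_ker]
    simp only [map_mul, map_inv] at hk' ⊢
    rw [hk', hA, ← hy, mul_inv_cancel]
  exact (H.mul_mem_cancel_right (H.inv_mem hh)).1
    ((H.mul_mem_cancel_right (H.inv_mem hk)).1 (h1 hIA))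

/-- **Lemma 3.6 (level 3).** For `n ≥ 3` and `f ∈ Aut(F_n)`: if `IA_n ⊆ N(f)`,
`Γ_n(3) ⊆ ρ(N(f))`, and the image of `ρ(N(f)) ∩ SL_n(ℤ)` in `PSL_n(ℤ/3ℤ)` is nontrivial,
then `N(f) = SAut(F_n)` if `det f̄ = 1` and `N(f) = Aut(F_n)` if `det f̄ = -1`. -/
theorem normalClosure_of_level_three (n : ℕ) (hn : 3 ≤ n) (f : FrAut n)
    (h1 : IA n ≤ Subgroup.normalClosure {f})
    (h2 : GammaGL n 3 ≤ (Subgroup.normalClosure {f}).map (ρ n))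
    (h3 : Subgroup.map ((projPSL n 3).comp (redSL n 3))
        (Subgroup.comap (toGLZ n) ((Subgroup.normalClosure {f}).map (ρ n))) ≠ ⊥) :
    (detρ n f = 1 → Subgroup.normalClosure {f} = SAut n) ∧
    (detρ n f = -1 → Subgroup.normalClosure {f} = ⊤) := by
  have : Fact (Nat.Prime 3) := ⟨Nat.prime_three⟩
  have hle : SAut n ≤ Subgroup.normalClosure {f} := SAut_le_of_normal hn 3 _ h1 h2 h3
  have hf : f ∈ Subgroup.normalClosure {f} := Subgroup.subset_normalClosure rfl
  refine ⟨fun hdet => le_antisymm ?_ hle, fun hdet => eq_top_iff.2 fun g _ => ?_⟩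
  · have : (SAut n).Normal := MonoidHom.normal_ker _
    exact Subgroup.normalClosure_le_normal (Set.singleton_subset_iff.2 hdet)
  · rcases Int.units_eq_one_or (detρ n g) with hg | hg
    · exact hle hg
    · refine (Subgroup.mul_mem_cancel_right _ hf).1 (hle ?_)
      rw [SAut, MonoidHom.mem_ker, map_mul, hg, hdet, neg_mul_neg, one_mul]

end NormalClosurePaper
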